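/- Let m ≥ 2 and let σ₀ = ±1 if m is odd and σ₀ = (−1)^{m/2} if m is even. Let P be an (m−1)×(m−1) real signed permutation matrix, let A be the m×m matrix with entry σ₀ in position (1, m), entries A_{i+1,j} = P_{ij} for 1 ≤ i, j ≤ m−1, and all other entries zero; let B be the m×m matrix with entries B_{i+1,j+1} = P_{ij} for 1 ≤ i, j ≤ m−1 and all other entries zero; and for τ > 0 let D_τ = diag(1, τ, τ, …, τ). Then the following are equivalent: (i) for every k ∈ ℝ and every τ > 0, every complex eigenvalue ω of D_τ⁻¹(kA + iB) satisfies Im ω ≤ 0; (ii) P = P*. -/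

import Mathlib

/-- A real signed permutation matrix: all entries in `{-1, 0, 1}`, with exactly one
nonzero entry in each row and each column. -/
def IsSignedPerm {n : ℕ} (P : Matrix (Fin n) (Fin n) ℝ) : Prop :=
  (∀ i j, P i j = -1 ∨ P i j = 0 ∨ P i j = 1) ∧
  (∀ i, ∃! j, P i j ≠ 0) ∧ (∀ j, ∃! i, P i j ≠ 0)

/-- The m×m matrix with entry `s` in (1-indexed) position (1, m), the matrix `P` in
positions `A_{i+1,j} = P_{ij}` for `1 ≤ i, j ≤ m-1`, and all other entries zero. -/
noncomputable def embedA (m : ℕ) (s : ℝ) (P : Matrix (Fin (m-1)) (Fin (m-1)) ℝ) :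
    Matrix (Fin m) (Fin m) ℝ := fun i j =>
  if hi : (i : ℕ) = 0 then (if (j : ℕ) = m - 1 then s else 0)
  else if hj : (j : ℕ) < m - 1 then
    P ⟨(i : ℕ) - 1, by have := i.isLt; omega⟩ ⟨(j : ℕ), hj⟩
  else 0

/-- The m×m matrix with entries `B_{i+1,j+1} = P_{ij}` (1-indexed) for `1 ≤ i, j ≤ m-1`
and all other entries zero. -/
noncomputable def embedB (m : ℕ) (P : Matrix (Fin (m-1)) (Fin (m-1)) ℝ) :
    Matrix (Fin m) (Fin m) ℝ := fun i j =>
  if h : (i : ℕ) = 0 ∨ (j : ℕ) = 0 then 0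
  else P ⟨(i : ℕ) - 1, by have := i.isLt; omega⟩ ⟨(j : ℕ) - 1, by have := j.isLt; omega⟩

/-- The (m-1)×(m-1) matrix `P*` with (1-indexed) entries `p_{ij} = 0` if `i + j ≠ m`,
and for `i + j = m`: `p_{ij} = σ₀ (-1)^(j-1)` if `j ≤ m/2`, `p_{ij} = σ₀ (-1)^(m-j)`
if `j > m/2`. -/
noncomputable def Pstar (m : ℕ) (σ₀ : ℝ) : Matrix (Fin (m-1)) (Fin (m-1)) ℝ := fun i j =>
  if (i : ℕ) + (j : ℕ) + 2 = m then
    (if 2 * ((j : ℕ) + 1) ≤ m then σ₀ * (-1) ^ (j : ℕ)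
     else σ₀ * (-1) ^ (m - ((j : ℕ) + 1)))
  else 0

/-- The diagonal matrix `D_τ = diag(1, τ, τ, …, τ)` (as a complex matrix). -/
noncomputable def Dmat (m : ℕ) (τ : ℝ) : Matrix (Fin m) (Fin m) ℂ :=
  Matrix.diagonal (fun i => if (i : ℕ) = 0 then 1 else (τ : ℂ))

section analytic
open scoped Matrix ComplexOrder MatrixOrder Matrix.Norms.L2Operator
variable {n : ℕ}

lemma normal_sa (X : Matrix (Fin n) (Fin n) ℂ) (hX : IsStarNormal X)
    (h : ∀ z ∈ spectrum ℂ X, z.im = 0) : star X = X := by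
  have h1 : cfc (fun z : ℂ => star z) X = star X := cfc_star_id X
  rw [← h1]
  conv_rhs => rw [← cfc_id ℂ X]
  apply cfc_congr
  intro z hz
  exact Complex.conj_eq_iff_im.2 (h z hz)

lemma normal_nonpos (X : Matrix (Fin n) (Fin n) ℂ) (hX : IsStarNormal X)
    (h : ∀ z ∈ spectrum ℂ X, z.re ≤ 0) : (-(X + star X)).PosSemidef := by
  have h1 : cfc (fun z : ℂ => star z) X = star X := cfc_star_id X
  have h3 : cfc (fun z : ℂ => -(z + star z)) X = -(X + star X) := by
    rw [cfc_neg, cfc_add X (fun z : ℂ => z) (fun z : ℂ => star z) (by fun_prop) (by fun_prop), h1, cfc_id' ℂ X]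
  rw [← Matrix.nonneg_iff_posSemidef, ← h3]
  apply cfc_nonneg
  intro z hz
  have := h z hz
  rw [Complex.le_def]
  simp
  linarith

lemma norm_charpoly (X : Matrix (Fin n) (Fin n) ℂ)
    (h : ∀ z ∈ spectrum ℂ X, z.im ≤ 0) (w : ℂ) (hw : 0 < w.im) :
    w.im ^ n ≤ ‖X.charpoly.eval w‖ := by
  have hs := IsAlgClosed.splits X.charpoly
  rw [hs.eval_eq_prod_roots_of_monic X.charpoly_monic]
  have hc : X.charpoly.roots.card = n := by
    rw [← hs.natDegree_eq_card_roots, Matrix.charpoly_natDegree_eq_dim]; simp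
  have hr : ∀ z ∈ X.charpoly.roots, z.im ≤ 0 := fun z hz => 
    h z (Matrix.mem_spectrum_iff_isRoot_charpoly.2 (Polynomial.isRoot_of_mem_roots hz))
  revert hc hr
  generalize X.charpoly.roots = s
  clear h hs X
  intro hc hr
  subst hc
  induction s using Multiset.induction_on with
  | empty => simp
  | cons a s ih => 
    have h1 := ih (fun z hz => hr z (Multiset.mem_cons_of_mem hz))
    have h2 := hr a (Multiset.mem_cons_self a s)
    have h3 : w.im ≤ ‖w - a‖ := by
      have := (abs_le.1 (Complex.abs_im_le_norm (w - a))).2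
      simp at this; linarith
    simp only [Multiset.card_cons, Multiset.map_cons, Multiset.prod_cons, norm_mul, pow_succ]
    rw [mul_comm]
    gcongr

lemma lim_spec (X Y : Matrix (Fin n) (Fin n) ℂ)
    (h : ∀ k : ℝ, 0 < k → ∀ z ∈ spectrum ℂ ((k:ℂ) • X + Y), z.im ≤ 0) :
    ∀ z ∈ spectrum ℂ X, z.im ≤ 0 := by
  intro w hw
  by_contra! hc
  have key : ∀ e : ℝ, 0 < e → w.im ^ n ≤ ‖(X + (e:ℂ) • Y).charpoly.eval w‖ := by
    intro e he
    refine norm_charpoly _ ?_ w hc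
    intro z hz
    have he' : (e:ℂ) ≠ 0 := by exact_mod_cast he.ne'
    have h1 : ((Units.mk0 _ he')⁻¹ • z) ∈ spectrum ℂ ((Units.mk0 _ he')⁻¹ • (X + (e:ℂ) • Y)) :=
      spectrum.smul_mem_smul_iff.2 hz
    have h2 : ((Units.mk0 _ he')⁻¹ • (X + (e:ℂ) • Y)) = ((e⁻¹:ℝ):ℂ) • X + Y := by
      rw [Units.smul_def]
      ext i j
      simp [he', mul_add]
    rw [h2] at h1
    have := h _ (inv_pos.2 he) _ h1
    rw [Units.smul_def] at this
    have h4 : (e⁻¹ : ℝ) * z.im ≤ 0 := by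
      have h5 : ((((Units.mk0 _ he')⁻¹ : ℂˣ) : ℂ) • z) = ((e⁻¹:ℝ):ℂ) * z := by simp
      rw [h5, Complex.im_ofReal_mul] at this
      exact this
    by_contra! hz
    have := mul_pos (inv_pos.2 he) hz
    linarith
  have hcont : Continuous fun e : ℝ => ‖(X + (e:ℂ) • Y).charpoly.eval w‖ := by
    simp only [Matrix.eval_charpoly]
    fun_prop
  have h0 : ‖(X + ((0:ℝ):ℂ) • Y).charpoly.eval w‖ = 0 := by
    have := Matrix.mem_spectrum_iff_isRoot_charpoly.1 hw
    simpa using this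
  have ht : w.im ^ n ≤ ‖(X + ((0:ℝ):ℂ) • Y).charpoly.eval w‖ := by
    refine ge_of_tendsto (x := nhdsWithin (0:ℝ) (Set.Ioi 0)) ((hcont.tendsto 0).mono_left nhdsWithin_le_nhds) ?_
    filter_upwards [self_mem_nhdsWithin] with e he using key e he
  have := pow_pos hc n
  linarith

end analytic

open scoped Matrix ComplexOrder

section entries
variable {n : ℕ} (s : ℝ) (P : Matrix (Fin n) (Fin n) ℝ)

lemma eA0l : embedA (n+1) s P 0 (Fin.last n) = s := by simp [embedA]
lemma eA0c (j : Fin n) : embedA (n+1) s P 0 j.castSucc = 0 := by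
  have := j.isLt
  simp [embedA]; omega
lemma eAsl (i : Fin n) : embedA (n+1) s P i.succ (Fin.last n) = 0 := by simp [embedA]
lemma eAsc (i j : Fin n) : embedA (n+1) s P i.succ j.castSucc = P i j := by simp [embedA]
lemma eB0 (j : Fin (n+1)) : embedB (n+1) P 0 j = 0 := by simp [embedB]
lemma eB0' (j : Fin (n+1)) : embedB (n+1) P j 0 = 0 := by simp [embedB]
lemma eBs (i j : Fin n) : embedB (n+1) P i.succ j.succ = P i j := by simp [embedB]

lemma sp_orth (hP : IsSignedPerm P) : P * Pᵀ = 1 := by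
  obtain ⟨h1, h2, h3⟩ := hP
  ext i j
  rw [Matrix.mul_apply]
  obtain ⟨k, hk, hk'⟩ := h2 i
  rw [Finset.sum_eq_single k]
  · by_cases hij : i = j
    · subst hij
      rcases h1 i k with h | h | h <;> simp_all
    · have : P j k = 0 := by
        by_contra hc
        exact hij ((h3 k).unique hk hc)
      simp [this, hij]
  · intro b _ hb
    have : P i b = 0 := by
      by_contra hc
      exact hb (hk' b hc)
    simp [this]
  · simp

lemma eA_orth (hs : s * s = 1) (hP : P * Pᵀ = 1) :
    embedA (n+1) s P * (embedA (n+1) s P)ᵀ = 1 := by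
  ext i j
  have h := fun a b => congrFun (congrFun hP a) b
  simp only [Matrix.mul_apply, Matrix.transpose_apply] at h
  rw [Matrix.mul_apply, Fin.sum_univ_castSucc]
  simp only [Matrix.transpose_apply]
  refine Fin.cases ?_ (fun i => ?_) i <;> refine Fin.cases ?_ (fun j => ?_) j
  · simp [eA0l, eA0c, hs]
  · simp [eA0l, eA0c, eAsl, Matrix.one_apply, Fin.ext_iff]
  · simp [eA0l, eA0c, eAsl, Matrix.one_apply, Fin.ext_iff]
  · simp [eAsl, eAsc, h, Matrix.one_apply]

lemma eB_orth (hP : P * Pᵀ = 1) :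
    embedB (n+1) P * (embedB (n+1) P)ᵀ = (embedB (n+1) P)ᵀ * (embedB (n+1) P) := by
  have hP' : Pᵀ * P = 1 := mul_eq_one_comm.1 hP
  ext i j
  have h := fun a b => congrFun (congrFun hP a) b
  have h' := fun a b => congrFun (congrFun hP' a) b
  simp only [Matrix.mul_apply, Matrix.transpose_apply] at h h'
  rw [Matrix.mul_apply, Fin.sum_univ_succ, Matrix.mul_apply, Fin.sum_univ_succ]
  simp only [Matrix.transpose_apply]
  refine Fin.cases ?_ (fun i => ?_) i <;> refine Fin.cases ?_ (fun j => ?_) j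
  · simp [eB0, eB0']
  · simp [eB0, eB0']
  · simp [eB0, eB0']
  · simp [eB0, eB0', eBs, h, h']

end entries

lemma map_normal {n : ℕ} (X : Matrix (Fin n) (Fin n) ℝ) (h : X * Xᵀ = Xᵀ * X) :
    IsStarNormal (X.map Complex.ofReal) := by
  have hs : star (X.map Complex.ofReal) = Xᵀ.map Complex.ofReal := by
    ext i j; simp [Matrix.star_apply]
  constructor
  rw [hs, Commute, SemiconjBy]
  have := congrArg (fun Y => Matrix.map Y Complex.ofRealHom) h
  simp only [Matrix.map_mul] at this
  exact this.symm

lemma combi {n : ℕ} (σ : ℝ) (hσ : σ ≠ 0) (P : Matrix (Fin n) (Fin n) ℝ)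
    (hP : IsSignedPerm P)
    (hA : ∀ a b, embedA (n+1) σ P a b = embedA (n+1) σ P b a)
    (hB : ∀ i j, P i i = 0 → P i j = - P j i) : P = Pstar (n+1) σ := by
  obtain ⟨h1, h2, h3⟩ := hP
  have anti : ∀ i j, i ≠ j → P i j ≠ 0 → P j i = - P i j := by
    intro i j hij h
    have : P i i = 0 := by
      by_contra hc
      exact hij ((h2 i).unique hc h)
    rw [hB i j this, neg_neg]
  have shift : ∀ i j i' j' : Fin n, (i':ℕ) + 1 = j → (j':ℕ) = i + 1 → P i j = P i' j' := by
    intro i j i' j' hi hj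
    have := hA i.succ j.castSucc
    rw [eAsc] at this
    rw [this, show j.castSucc = i'.succ from Fin.ext (by simp; omega),
      show i.succ = j'.castSucc from Fin.ext (by simp; omega), eAsc]
  have C : ∀ t : ℕ, ∀ i j : Fin n, (j:ℕ) = t → (i:ℕ) + j + 1 = n → 2 * (t + 1) ≤ n + 1 →
      P i j = σ * (-1) ^ t := by
    intro t
    induction t with
    | zero =>
      intro i j hj hij _
      have := hA i.succ j.castSucc
      rw [eAsc, show i.succ = Fin.last n from Fin.ext (by simp; omega),
        show j.castSucc = 0 from Fin.ext (by simp; omega), eA0l] at this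
      simpa using this
    | succ t ih =>
      intro i j hj hij ht
      have e1 : t < n := by omega
      have e2 : n - 1 - t < n := by omega
      have h := ih ⟨n-1-t, e2⟩ ⟨t, e1⟩ rfl (by simp; omega) (by omega)
      rw [shift i j ⟨t, e1⟩ ⟨n-1-t, e2⟩ (by simp; omega) (by simp; omega),
        anti ⟨n-1-t, e2⟩ ⟨t, e1⟩ (by simp [Fin.ext_iff]; omega) (by rw [h]; simp [hσ]), h]
      ring
  have D : ∀ i j : Fin n, (i:ℕ) + j + 1 = n → P i j = Pstar (n+1) σ i j := by
    intro i j hij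
    have e : (i:ℕ) + (j:ℕ) + 2 = n + 1 := by omega
    simp only [Pstar, if_pos e]
    split_ifs with h
    · exact C j i j rfl hij h
    · have := C i j i rfl (by omega) (by omega)
      rw [anti j i (by simp [Fin.ext_iff]; omega) (by rw [this]; simp [hσ]), this,
        show n + 1 - ((j:ℕ)+1) = i + 1 by omega]
      ring
  ext i j
  by_cases e : (i:ℕ) + j + 1 = n
  · exact D i j e
  · have e' : ¬ ((i:ℕ) + (j:ℕ) + 2 = n + 1) := by omega
    simp only [Pstar, if_neg e']
    by_contra hc
    have e2 : n - 1 - i < n := by omega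
    have h := D i ⟨n-1-i, e2⟩ (by simp; omega)
    have h' : P i ⟨n-1-i, e2⟩ ≠ 0 := by
      rw [h]
      simp only [Pstar]
      rw [if_pos (by simp; omega)]
      split_ifs <;> simp [hσ]
    have := (h2 i).unique hc h'
    simp [Fin.ext_iff] at this
    omega

lemma star_A {n : ℕ} (σ : ℝ) (a b : Fin (n+1)) :
    embedA (n+1) σ (Pstar (n+1) σ) a b = embedA (n+1) σ (Pstar (n+1) σ) b a := by
  have ha := a.isLt
  have hb := b.isLt
  have key : ∀ a b : Fin (n+1), embedA (n+1) σ (Pstar (n+1) σ) a b =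
      if (a:ℕ) + b = n then (if 2 * (b:ℕ) + 2 ≤ n + 1 then σ * (-1)^(b:ℕ) else σ * (-1)^(a:ℕ)) else 0 := by
    intro a b
    refine Fin.cases ?_ (fun i => ?_) a <;> refine Fin.lastCases ?_ (fun j => ?_) b
    · rw [eA0l]; simp
      intro h; have : n = 0 := by omega
      simp [this]
    · rw [eA0c]; have := j.isLt; rw [if_neg]; simp; omega
    · rw [eAsl]; rw [if_neg]; simp
    · rw [eAsc]
      simp only [Pstar, Fin.val_succ, Fin.val_castSucc]
      by_cases h : (i:ℕ) + j + 2 = n + 1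
      · rw [if_pos h, if_pos (show (i:ℕ) + 1 + j = n by omega), show n + 1 - ((j:ℕ) + 1) = i + 1 by omega]
        rfl
      · rw [if_neg h, if_neg (by omega)]
  rw [key, key]
  by_cases h : (a:ℕ) + b = n
  · rw [if_pos h, if_pos (show (b:ℕ) + a = n by omega)]
    split_ifs with h1 h2 h2
    · omega
    · rfl
    · rfl
    · rw [show (a:ℕ) = b by omega]
  · rw [if_neg h, if_neg (by omega)]

lemma star_B {n : ℕ} (σ : ℝ) (hσ : Even (n+1) → σ = (-1) ^ ((n+1) / 2)) (a b : Fin (n+1)) :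
    (a ≠ b → embedB (n+1) (Pstar (n+1) σ) a b + embedB (n+1) (Pstar (n+1) σ) b a = 0) ∧
    embedB (n+1) (Pstar (n+1) σ) a a ≤ 0 := by
  constructor
  · refine Fin.cases ?_ (fun i => ?_) a <;> refine Fin.cases ?_ (fun j => ?_) b
    · simp
    · simp [eB0, eB0']
    · simp [eB0, eB0']
    · intro hij
      have hij : (i:ℕ) ≠ j := fun h => hij (by rw [Fin.ext h])
      rw [eBs, eBs]
      simp only [Pstar]
      by_cases h : (i:ℕ) + j + 2 = n + 1
      · rw [if_pos h, if_pos (show (j:ℕ) + i + 2 = n + 1 by omega), show n + 1 - ((j:ℕ) + 1) = i + 1 by omega,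
          show n + 1 - ((i:ℕ) + 1) = j + 1 by omega]
        split_ifs with h1 h2 h2
        · omega
        · ring
        · ring
        · omega
      · rw [if_neg h, if_neg (by omega)]; simp
  · refine Fin.cases ?_ (fun i => ?_) a
    · simp [eB0]
    · rw [eBs]
      simp only [Pstar]
      by_cases h : (i:ℕ) + i + 2 = n + 1
      · rw [if_pos h, if_pos (by omega), hσ ⟨i+1, by omega⟩, show (n+1)/2 = i + 1 by omega,
          ← pow_add, Odd.neg_one_pow ⟨i, by ring⟩]
        norm_num
      · rw [if_neg h]

lemma herm {N : ℕ} (A B : Matrix (Fin N) (Fin N) ℝ) (hA : ∀ a b, A a b = A b a)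
    (hB : ∀ a b, a ≠ b → B a b + B b a = 0) (hB' : ∀ a, B a a ≤ 0)
    (d : Fin N → ℝ) (hd : ∀ a, 0 < d a) (k : ℝ) (ω : ℂ) (v : Fin N → ℂ) (hv0 : v ≠ 0)
    (hv : ∀ a, ∑ b, ((k:ℂ) * (A a b : ℂ) + Complex.I * (B a b : ℂ)) * v b = ω * (d a * v a)) :
    ω.im ≤ 0 := by
  set f : Fin N → Fin N → ℝ := fun a b =>
    (star (v a) * (((k:ℂ) * (A a b : ℂ) + Complex.I * (B a b : ℂ)) * v b)).im with hf
  have hff : ∀ a b, f a b + f b a ≤ 0 := by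
    intro a b
    have e : f a b + f b a = (B a b + B b a) * ((v a).re * (v b).re + (v a).im * (v b).im) := by
      simp only [hf]
      rw [hA b a]
      simp
      ring
    rw [e]
    by_cases hab : a = b
    · subst hab
      have := hB' a
      nlinarith [mul_self_nonneg (v a).re, mul_self_nonneg (v a).im]
    · rw [hB a b hab]; simp
  have h1 : ∀ a, ∑ b, f a b = ω.im * (d a * Complex.normSq (v a)) := by
    intro a
    simp only [hf]
    rw [← Complex.im_sum, ← Finset.mul_sum, hv a]
    have : star (v a) * (ω * (d a * v a)) = ω * ((d a * Complex.normSq (v a) : ℝ) : ℂ) := by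
      have := Complex.normSq_eq_conj_mul_self (z := v a)
      push_cast
      rw [this]
      simp only [Complex.star_def]
      ring
    rw [this, Complex.im_mul_ofReal]
  have h2 : ∑ a, ∑ b, f a b = ω.im * ∑ a, (d a * Complex.normSq (v a)) := by
    rw [Finset.mul_sum]
    exact Finset.sum_congr rfl fun a _ => h1 a
  have h3 : ∑ a, ∑ b, f a b + ∑ a, ∑ b, f a b ≤ 0 := by
    conv_lhs => 
      rhs
      rw [Finset.sum_comm]
    rw [← Finset.sum_add_distrib]
    refine Finset.sum_nonpos fun a _ => ?_
    rw [← Finset.sum_add_distrib]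
    exact Finset.sum_nonpos fun b _ => hff a b
  have h4 : 0 < ∑ a, (d a * Complex.normSq (v a)) := by
    obtain ⟨a, ha⟩ := Function.ne_iff.1 hv0
    refine Finset.sum_pos' (fun b _ => mul_nonneg (hd b).le (Complex.normSq_nonneg _)) ⟨a, Finset.mem_univ _, ?_⟩
    exact mul_pos (hd a) (Complex.normSq_pos.2 ha)
  by_contra! hc
  have := mul_pos hc h4
  linarith

lemma backward {n : ℕ} (σ : ℝ) (hσ : Even (n+1) → σ = (-1) ^ ((n+1) / 2)) (k τ : ℝ) (hτ : 0 < τ)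
    (ω : ℂ) (hω : ω ∈ spectrum ℂ ((Dmat (n+1) τ)⁻¹ *
          ((k : ℂ) • (embedA (n+1) σ (Pstar (n+1) σ)).map Complex.ofReal +
            Complex.I • (embedB (n+1) (Pstar (n+1) σ)).map Complex.ofReal))) : ω.im ≤ 0 := by
  rw [← Matrix.spectrum_toLin', ← Module.End.hasEigenvalue_iff_mem_spectrum] at hω
  obtain ⟨v, hv⟩ := hω.exists_hasEigenvector
  have hv1 := hv.apply_eq_smul
  rw [Matrix.toLin'_apply] at hv1
  have hdet : IsUnit (Dmat (n+1) τ).det := by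
    rw [Dmat, Matrix.det_diagonal, isUnit_iff_ne_zero, Finset.prod_ne_zero_iff]
    intro a _
    split_ifs
    · simp
    · exact_mod_cast hτ.ne'
  have hv2 := congrArg (fun w => (Dmat (n+1) τ) *ᵥ w) hv1
  simp only [Matrix.mulVec_mulVec, ← mul_assoc, Matrix.mul_nonsing_inv _ hdet, one_mul] at hv2
  refine herm _ _ (star_A σ) (fun a b => (star_B σ hσ a b).1) (fun a => (star_B σ hσ a a).2)
    (fun i => if (i:ℕ) = 0 then 1 else τ) (fun a => by split_ifs <;> simp [hτ]) k ω v hv.2 ?_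
  intro a
  have := congrFun hv2 a
  rw [Matrix.mulVec_smul, Dmat, Pi.smul_apply, Matrix.mulVec_diagonal, Matrix.mulVec_eq_sum] at this
  simp only [Finset.sum_apply] at this
  simp only [smul_eq_mul] at this
  rw [show (((if (a:ℕ) = 0 then (1:ℝ) else τ) : ℝ) : ℂ) = if (a:ℕ) = 0 then 1 else (τ:ℂ) by split_ifs <;> simp, ← this]
  refine Finset.sum_congr rfl fun b _ => ?_
  simp
  ring

lemma forward {n : ℕ} (σ : ℝ) (hσ : σ * σ = 1) (P : Matrix (Fin n) (Fin n) ℝ) (hP : IsSignedPerm P)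
    (h : ∀ k : ℝ, ∀ ω ∈ spectrum ℂ ((k : ℂ) • (embedA (n+1) σ P).map Complex.ofReal +
            Complex.I • (embedB (n+1) P).map Complex.ofReal), ω.im ≤ 0) :
    P = Pstar (n+1) σ := by
  have hO := sp_orth P hP
  have hAO := eA_orth σ P hσ hO
  have hAN := map_normal _ (hAO.trans (mul_eq_one_comm.1 hAO).symm)
  have hBN := map_normal _ (eB_orth P hO)
  refine combi σ (by rintro rfl; simp at hσ) P hP ?_ ?_
  · have s1 := lim_spec _ _ (fun k _ => h k)
    have s2 := lim_spec (-(embedA (n+1) σ P).map Complex.ofReal) 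
      (Complex.I • (embedB (n+1) P).map Complex.ofReal) (fun k _ z hz => h (-k) z (by simpa using hz))
    have := normal_sa _ hAN (fun z hz => le_antisymm (s1 z hz) (by
      have := s2 (-z) (by rw [← spectrum.neg_eq]; simpa using hz)
      simpa using this))
    intro a b
    have := congrFun (congrFun this b) a
    simpa [Matrix.star_apply] using this
  · have hs : ∀ z ∈ spectrum ℂ ((embedB (n+1) P).map Complex.ofReal), z.re ≤ 0 := by
      intro z hz
      have h1 : (Units.mk0 Complex.I Complex.I_ne_zero • z) ∈ spectrum ℂ
          (Units.mk0 Complex.I Complex.I_ne_zero • (embedB (n+1) P).map Complex.ofReal) :=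
        spectrum.smul_mem_smul_iff.2 hz
      rw [Units.smul_def, Units.smul_def] at h1
      have := h 0 _ (by simpa using h1)
      simpa using this
    have hp := normal_nonpos _ hBN hs
    intro i j hi
    have h0 := (hp.dotProduct_mulVec_zero_iff (Pi.single i.succ 1)).1 (by
      simp [Matrix.star_apply, eBs, hi])
    have h1 := congrFun h0 j.succ
    simp [Matrix.star_apply, eBs] at h1
    have h2 : (-P i j : ℝ) - P j i = 0 := by
      have := congrArg Complex.re h1
      simp at this
      linarith
    linarith

/-- For `m ≥ 2` with `σ₀ = ±1` (`m` odd) or `σ₀ = (-1)^(m/2)` (`m` even),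
and `P` a signed permutation matrix, the following are equivalent: (i) for every `k ∈ ℝ`
and `τ > 0`, every complex eigenvalue `ω` of `D_τ⁻¹ (k A + i B)` satisfies `Im ω ≤ 0`;
(ii) `P = P*`. -/
theorem stmt7 (m : ℕ) (hm : 2 ≤ m) (σ₀ : ℝ)
    (hσ : (Odd m ∧ (σ₀ = 1 ∨ σ₀ = -1)) ∨ (Even m ∧ σ₀ = (-1) ^ (m / 2)))
    (P : Matrix (Fin (m-1)) (Fin (m-1)) ℝ) (hP : IsSignedPerm P) :
    (∀ k τ : ℝ, 0 < τ →
      ∀ ω ∈ spectrum ℂ ((Dmat m τ)⁻¹ *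
          ((k : ℂ) • (embedA m σ₀ P).map Complex.ofReal +
            Complex.I • (embedB m P).map Complex.ofReal)),
        ω.im ≤ 0) ↔
    P = Pstar m σ₀ := by
  obtain ⟨n, rfl⟩ : ∃ n, m = n + 1 := ⟨m - 1, by omega⟩
  have hσ1 : σ₀ * σ₀ = 1 := by
    rcases hσ with ⟨_, h | h⟩ | ⟨_, h⟩
    · simp [h]
    · simp [h]
    · rw [h, ← pow_add, Even.neg_one_pow ⟨_, rfl⟩]
  have hσ2 : Even (n+1) → σ₀ = (-1) ^ ((n+1) / 2) := by
    intro he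
    rcases hσ with ⟨h, _⟩ | ⟨_, h⟩
    · exact absurd he (Nat.not_even_iff_odd.2 h)
    · exact h
  constructor
  · intro h
    refine forward σ₀ hσ1 P hP fun k ω hω => h k 1 one_pos ω ?_
    have : Dmat (n+1) 1 = 1 := by
      simp [Dmat]
    rw [this]
    simpa using hω
  · intro h k τ hτ ω hω
    subst h
    exact backward σ₀ hσ2 k τ hτ ω hω
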